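/- arXiv:2505.19655 — 2 statements merged into one kernel-verified Lean document; each statement's English description precedes it below -/
import Mathlib

section
/- Let K : ℝ → ℝ be C¹ and strictly decreasing on (0,∞), and let Ω be the triangle with vertices A, B, C satisfying |AB| > |AC|. Define V_Ω(P) = ∫_Ω K(|P - Q|) dQ. Then for any P on segment AC and P' on segment AB with |PA| = |P'A| and P ≠ A, we have V_Ω(P') > V_Ω(P). -/
open MeasureTheory Set Real

noncomputable section

abbrev E2 := EuclideanSpace ℝ (Fin 2)

theorem aux_dist (p q : E2) (hn : ‖p‖ = ‖q‖) (hne : p ≠ q) (x y : ℝ) (hxy : y < x) :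
    ‖q - (x • q + y • p)‖ < ‖p - (x • q + y • p)‖ := by
  have h0 : 0 < ‖p - q‖ ^ 2 := by
    have := norm_pos_iff.2 (sub_ne_zero.2 hne)
    positivity
  rw [norm_sub_sq_real] at h0
  refine lt_of_pow_lt_pow_left₀ 2 (norm_nonneg _) ?_
  rw [norm_sub_sq_real, norm_sub_sq_real, inner_add_right, inner_add_right, inner_smul_right,
    inner_smul_right, inner_smul_right, inner_smul_right, real_inner_self_eq_norm_sq,
    real_inner_self_eq_norm_sq, real_inner_comm p q, hn]
  rw [hn] at h0
  nlinarith

theorem aux_mem (A B C Q : E2) : Q ∈ convexHull ℝ {A, B, C} ↔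
    ∃ β γ : ℝ, 0 ≤ β ∧ 0 ≤ γ ∧ β + γ ≤ 1 ∧ Q - A = β • (B - A) + γ • (C - A) := by
  rw [convexHull_insert (by simp), convexHull_pair]
  simp only [convexJoin_singleton_left, mem_iUnion, segment, mem_ofPred_eq, exists_prop]
  constructor
  · rintro ⟨R, ⟨a, b, ha, hb, hab, rfl⟩, c, d, hc, hd, hcd, rfl⟩
    refine ⟨d * a, d * b, by positivity, by positivity, by nlinarith, ?_⟩
    obtain rfl : c = 1 - d := by linarith
    obtain rfl : a = 1 - b := by linarith
    module
  · rintro ⟨β, γ, hβ, hγ, h1, h⟩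
    obtain rfl : Q = A + (β • (B - A) + γ • (C - A)) := by rw [← h]; abel
    rcases eq_or_lt_of_le (add_nonneg hβ hγ) with h0 | h0
    · obtain rfl : β = 0 := by linarith
      obtain rfl : γ = 0 := by linarith
      exact ⟨B, ⟨1, 0, by simp⟩, 1, 0, by simp⟩
    · refine ⟨_, ⟨β / (β + γ), γ / (β + γ), by positivity, by positivity, by field_simp, rfl⟩,
        1 - (β + γ), β + γ, by linarith, by linarith, by ring, ?_⟩
      rw [smul_add, smul_smul, smul_smul, mul_div_cancel₀ _ h0.ne', mul_div_cancel₀ _ h0.ne']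
      module

/-- boundary comparison of `V_Ω` for points equidistant from `A`
on the sides `AC` and `AB`, when `|AB| > |AC|`. -/
theorem stmt_1
    (K : ℝ → ℝ) (hK1 : ContDiff ℝ 1 K) (hKanti : StrictAntiOn K (Set.Ioi 0))
    (hKint : IntegrableOn (fun r => K r * r) (Set.Ioc (0:ℝ) 1))
    (A B C : E2) (hABC : AffineIndependent ℝ ![A, B, C])
    (hside : dist A B > dist A C)
    (P P' : E2) (hP : P ∈ segment ℝ A C) (hP' : P' ∈ segment ℝ A B)
    (hdist : dist P A = dist P' A) (hPne : P ≠ A) :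
    (∫ Q in convexHull ℝ {A, B, C}, K (dist P' Q)) >
      ∫ Q in convexHull ℝ {A, B, C}, K (dist P Q) := by
  have hKc : Continuous K := hK1.continuous
  have hKa : StrictAntiOn K (Set.Ici 0) := by
    intro x hx y hy hxy
    rcases eq_or_lt_of_le (show (0:ℝ) ≤ x from hx) with rfl | hx0
    · have h1 : K y < K (y / 2) := hKanti (half_pos hxy) hxy (half_lt_self hxy)
      have h2 : K (y / 2) ≤ K 0 := by
        refine ge_of_tendsto ((hKc.tendsto 0).mono_left (nhdsWithin_le_nhds (s := Ioi 0))) ?_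
        filter_upwards [Ioo_mem_nhdsGT (half_pos hxy)] with r hr
        exact (hKanti hr.1 (half_pos hxy) hr.2).le
      exact h1.trans_le h2
    · exact hKanti hx0 (hx0.trans hxy) hxy
  have hLI : LinearIndependent ℝ ![B - A, C - A] := by
    have h := (affineIndependent_iff_linearIndependent_vsub ℝ _ (0 : Fin 3)).1 hABC
    have h2 := h.comp (fun i : Fin 2 => (⟨i.succ, Fin.succ_ne_zero i⟩ : {x : Fin 3 // x ≠ 0}))
      (by intro i j hij; simpa using hij)
    have e : ![B - A, C - A] = ((fun i : {x : Fin 3 // x ≠ 0} => ![A, B, C] i -ᵥ ![A, B, C] 0) ∘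
        (fun i : Fin 2 => (⟨i.succ, Fin.succ_ne_zero i⟩ : {x : Fin 3 // x ≠ 0}))) := by
      ext i : 1
      fin_cases i <;> simp
    rw [e]
    exact h2
  rw [LinearIndependent.pair_iff] at hLI
  set T := convexHull ℝ ({A, B, C} : Set E2) with hT
  -- the points
  obtain ⟨c0, hc0, hp⟩ : ∃ c0 : ℝ, 0 < c0 ∧ C - A = c0 • (P - A) := by
    rw [segment_eq_image'] at hP
    obtain ⟨s, ⟨hs0, hs1⟩, rfl⟩ := hP
    have hs : 0 < s := lt_of_le_of_ne hs0 (by rintro rfl; simp at hPne)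
    refine ⟨s⁻¹, by positivity, ?_⟩
    simp [smul_smul, hs.ne']
  have hP'ne : P' ≠ A := by
    rintro rfl
    rw [dist_self, dist_eq_zero] at hdist
    exact hPne hdist
  obtain ⟨b0, hb0, hq⟩ : ∃ b0 : ℝ, 0 < b0 ∧ B - A = b0 • (P' - A) := by
    rw [segment_eq_image'] at hP'
    obtain ⟨s, ⟨hs0, hs1⟩, rfl⟩ := hP'
    have hs : 0 < s := lt_of_le_of_ne hs0 (by rintro rfl; simp at hP'ne)
    refine ⟨s⁻¹, by positivity, ?_⟩
    simp [smul_smul, hs.ne']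
  set p := P - A with hpdef
  set q := P' - A with hqdef
  have hn : ‖p‖ = ‖q‖ := by simpa [dist_eq_norm] using hdist
  have hbc : c0 < b0 := by
    rw [dist_comm A B, dist_comm A C, dist_eq_norm, dist_eq_norm, hp, hq, norm_smul, norm_smul,
      Real.norm_of_nonneg hb0.le, Real.norm_of_nonneg hc0.le, hn] at hside
    exact lt_of_mul_lt_mul_right hside (norm_nonneg _)
  have hpq : p ≠ q := by
    intro h
    have := (hLI c0 (-b0) (by rw [hp, hq, h]; module)).1
    exact hc0.ne' this
  -- reflection
  let R : E2 ≃ₗᵢ[ℝ] E2 := (Submodule.span ℝ {q - p})ᗮ.reflection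
  have hRR : ∀ z, R (R z) = z := fun z => Submodule.reflection_reflection _ z
  have hRq : R q = p := Submodule.reflection_sub hn.symm
  have hRp : R p = q := by rw [← hRq, hRR]
  let σ : E2 → E2 := fun z => A + R (z - A)
  have hσA : ∀ z, σ z - A = R (z - A) := fun z => by simp [σ]
  have hσσ : ∀ z, σ (σ z) = z := fun z => by
    have := hσA (σ z)
    rw [hσA z, hRR] at this
    exact sub_left_injective this
  have hσc : Continuous σ := by fun_prop
  have hσmp : MeasurePreserving σ volume volume :=
    (measurePreserving_add_left volume A).comp
      (R.measurePreserving.comp (measurePreserving_sub_right volume A))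
  have hσemb : MeasurableEmbedding σ :=
    hσc.measurableEmbedding (Function.LeftInverse.injective hσσ)
  have hσd : ∀ x y, dist (σ x) (σ y) = dist x y := fun x y => by simp [σ]
  have hσP' : σ P' = P := by
    have := hσA P'
    rw [← hqdef, hRq] at this
    exact sub_left_injective this
  have hσP : σ P = P' := by rw [← hσP', hσσ]
  let g : E2 → ℝ := fun Q => K (dist P' Q) - K (dist P Q)
  have hgc : Continuous g := by fun_prop
  have hgσ : ∀ Q, g (σ Q) = - g Q := fun Q => by
    have h1 : dist P' (σ Q) = dist P Q := by rw [← hσP, hσd]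
    have h2 : dist P (σ Q) = dist P' Q := by rw [← hσP', hσd]
    simp only [g, h1, h2]; ring
  have hTc : IsCompact T := (Set.toFinite ({A, B, C} : Set E2)).isCompact_convexHull ℝ
  have hint : ∀ (f : E2 → ℝ), Continuous f → IntegrableOn f T := fun f hf =>
    hf.continuousOn.integrableOn_compact hTc
  -- positivity
  have hpos : ∀ Q ∈ T \ σ ⁻¹' T, 0 < g Q := by
    rintro Q ⟨hQ, hQ'⟩
    obtain ⟨β, γ, hβ, hγ, h1, h⟩ := (aux_mem A B C Q).1 hQ
    have h' : Q - A = (β * b0) • q + (γ * c0) • p := by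
      rw [h, hp, hq, smul_smul, smul_smul]
    have hlt : γ * c0 < β * b0 := by
      by_contra! hle
      apply hQ'
      refine (aux_mem A B C (σ Q)).2 ⟨γ * c0 / b0, β * b0 / c0, by positivity, by positivity, ?_, ?_⟩
      · have e1 : γ * c0 / b0 + β * b0 / c0 - (β + γ) =
            (β * b0 - γ * c0) * (b0 - c0) / (b0 * c0) := by field_simp; ring
        have : (β * b0 - γ * c0) * (b0 - c0) / (b0 * c0) ≤ 0 :=
          div_nonpos_of_nonpos_of_nonneg
            (mul_nonpos_of_nonpos_of_nonneg (by linarith) (by linarith)) (by positivity)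
        linarith
      · rw [hσA, h', map_add, map_smul, map_smul, hRq, hRp, hp, hq, smul_smul, smul_smul,
          div_mul_cancel₀ _ hb0.ne', div_mul_cancel₀ _ hc0.ne', add_comm]
    have hd := aux_dist p q hn hpq _ _ hlt
    rw [← h', hpdef, hqdef, sub_sub_sub_cancel_right, sub_sub_sub_cancel_right, ← dist_eq_norm,
      ← dist_eq_norm] at hd
    exact sub_pos.2 (hKa dist_nonneg dist_nonneg hd)
  have hBT : B ∈ T := subset_convexHull ℝ _ (by simp)
  have hBσ : B ∉ σ ⁻¹' T := by
    intro hB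
    obtain ⟨β, γ, hβ, hγ, h1, h⟩ := (aux_mem A B C (σ B)).1 hB
    rw [hσA, hq, map_smul, hRq] at h
    have h2 : b0 • p = (b0 / c0) • (C - A) := by rw [hp, smul_smul, div_mul_cancel₀ _ hc0.ne']
    rw [h2, ← hq] at h
    have := (hLI β (γ - b0 / c0) (by rw [sub_smul, h]; module)).2
    have h3 : 1 < b0 / c0 := (one_lt_div hc0).2 hbc
    linarith
  have hmT : MeasurableSet T := hTc.measurableSet
  have hmS : MeasurableSet (σ ⁻¹' T) := hσc.measurable hmT
  have hintr : (interior T).Nonempty := by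
    rw [hT, interior_convexHull_nonempty_iff_affineSpan_eq_top]
    have := hABC.affineSpan_eq_top_iff_card_eq_finrank_add_one.2 (by simp)
    have e : Set.range ![A, B, C] = {A, B, C} := by
      simp only [Matrix.range_cons, Matrix.range_empty, Set.union_empty, Set.singleton_union]
    rwa [e] at this
  have hvol : 0 < volume (T \ σ ⁻¹' T) := by
    have hcl : B ∈ closure (interior T) := by
      rw [(convex_convexHull ℝ _).closure_interior_eq_closure_of_nonempty_interior hintr]
      exact subset_closure hBT
    have ho : IsOpen (σ ⁻¹' T)ᶜ := (hTc.isClosed.preimage hσc).isOpen_compl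
    have hne : ((σ ⁻¹' T)ᶜ ∩ interior T).Nonempty := mem_closure_iff.1 hcl _ ho hBσ
    refine lt_of_lt_of_le ((ho.inter isOpen_interior).measure_pos volume hne) (measure_mono ?_)
    rintro z ⟨h1, h2⟩
    exact ⟨interior_subset h2, h1⟩
  have hzero : ∫ Q in T ∩ σ ⁻¹' T, g Q = 0 := by
    have h := hσmp.setIntegral_preimage_emb hσemb g (T ∩ σ ⁻¹' T)
    have e : σ ⁻¹' (T ∩ σ ⁻¹' T) = T ∩ σ ⁻¹' T := by
      ext z
      simp only [mem_preimage, mem_inter_iff, hσσ]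
      exact and_comm
    rw [e] at h
    simp only [hgσ, integral_neg] at h
    linarith
  have hgpos : 0 < ∫ Q in T \ σ ⁻¹' T, g Q := by
    rw [setIntegral_pos_iff_support_of_nonneg_ae]
    · refine lt_of_lt_of_le hvol (measure_mono fun z hz => ⟨(hpos z hz).ne', hz⟩)
    · exact (ae_restrict_iff' (hmT.diff hmS)).2 (Filter.Eventually.of_forall fun z hz => (hpos z hz).le)
    · exact (hint g hgc).mono_set sdiff_subset
  have hsum : ∫ Q in T, g Q = 0 + ∫ Q in T \ σ ⁻¹' T, g Q := by
    rw [← hzero, integral_inter_add_sdiff hmS (hint g hgc)]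
  have hsub : ∫ Q in T, g Q = (∫ Q in T, K (dist P' Q)) - ∫ Q in T, K (dist P Q) :=
    integral_sub (hint _ (by fun_prop)) (hint _ (by fun_prop))
  linarith
end
end

section
/- Let Ω ⊂ ℝ² be a triangle ABC and K : ℝ → ℝ be C¹, strictly decreasing on (0,∞), with ∫₀¹ K(r) r dr < ∞. Define V_Ω(x) = ∫_Ω K(|x−y|) dy. Then the averaged boundary values of V_Ω on the three sides coincide: (1/|AB|) ∫_{AB} V_Ω ds = (1/|BC|) ∫_{BC} V_Ω ds = (1/|AC|) ∫_{AC} V_Ω ds. -/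
open MeasureTheory Set Real

noncomputable section

/-- The arc-length integral of a function `V` over the segment from `P` to `Q`. -/
def sideIntegral (V : E2 → ℝ) (P Q : E2) : ℝ :=
  dist P Q * ∫ t in (0:ℝ)..1, V ((1 - t) • P + t • Q)

instance aux_inst2 : (volume : Measure (ℝ × ℝ)).IsAddHaarMeasure := by
  rw [Measure.volume_eq_prod]
  infer_instance

instance aux_inst3 : (volume : Measure (ℝ × ℝ × ℝ)).IsAddHaarMeasure := by
  rw [Measure.volume_eq_prod]
  infer_instance

lemma aux_mp (L : (ℝ × ℝ × ℝ) →ₗ[ℝ] (ℝ × ℝ × ℝ)) (hL : ∀ x, L (L x) = x)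
    (Y : Set (ℝ × ℝ × ℝ)) (hYL : ∀ x ∈ Y, L x ∈ Y) (f : ℝ × ℝ × ℝ → ℝ) :
    ∫ x in Y, f (L x) = ∫ x in Y, f x := by
  have hcomp : L ∘ₗ L = LinearMap.id := by
    apply LinearMap.ext
    intro x
    simpa using hL x
  have hdet : LinearMap.det L * LinearMap.det L = 1 := by
    rw [← LinearMap.det_comp, hcomp, LinearMap.det_id]
  have hne : LinearMap.det L ≠ 0 := by
    intro h
    rw [h] at hdet
    norm_num at hdet
  have habs : |(LinearMap.det L)⁻¹| = 1 := by
    rcases mul_self_eq_one_iff.mp hdet with h | h <;> rw [h] <;> norm_num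
  have hcont : Continuous L := L.continuous_of_finiteDimensional
  have hmp : MeasurePreserving L (volume : Measure (ℝ × ℝ × ℝ)) volume := by
    refine ⟨hcont.measurable, ?_⟩
    rw [Measure.map_linearMap_addHaar_eq_smul_addHaar _ hne, habs]
    simp
  have hemb : MeasurableEmbedding L := by
    let e : (ℝ × ℝ × ℝ) ≃ᵐ (ℝ × ℝ × ℝ) :=
      { toFun := L, invFun := L, left_inv := hL, right_inv := hL,
        measurable_toFun := hcont.measurable, measurable_invFun := hcont.measurable }
    exact e.measurableEmbedding
  have hpre : L ⁻¹' Y = Y := by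
    ext x
    refine ⟨fun h => ?_, fun h => hYL x h⟩
    have := hYL _ h
    rwa [hL] at this
  have := hmp.setIntegral_preimage_emb hemb f Y
  rwa [hpre] at this

def auxS : Set (ℝ × ℝ) := {p | 0 ≤ p.1 ∧ 0 ≤ p.2 ∧ p.1 + p.2 ≤ 1}

lemma auxS_closed : IsClosed auxS := by
  have h1 : IsClosed {p : ℝ × ℝ | 0 ≤ p.1} := isClosed_le (by fun_prop) (by fun_prop)
  have h2 : IsClosed {p : ℝ × ℝ | 0 ≤ p.2} := isClosed_le (by fun_prop) (by fun_prop)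
  have h3 : IsClosed {p : ℝ × ℝ | p.1 + p.2 ≤ 1} := isClosed_le (by fun_prop) (by fun_prop)
  exact h1.inter (h2.inter h3)

lemma auxS_compact : IsCompact auxS := by
  refine (isCompact_Icc (a := ((0:ℝ),(0:ℝ))) (b := ((1:ℝ),(1:ℝ)))).of_isClosed_subset auxS_closed ?_
  rintro ⟨a, b⟩ ⟨h1, h2, h3⟩
  simp only at h1 h2 h3
  exact ⟨⟨h1, h2⟩, ⟨by simp only; linarith, by simp only; linarith⟩⟩

def auxX : Set (ℝ × ℝ × ℝ) := Icc (0:ℝ) 1 ×ˢ auxS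

lemma aux_null : (volume : Measure (ℝ × ℝ × ℝ)) {x | x.1 = x.2.1} = 0 := by
  let p : Submodule ℝ (ℝ × ℝ × ℝ) := 
    { carrier := {x | x.1 = x.2.1}
      add_mem' := by
        intro a b ha hb
        simp only [mem_ofPred_eq] at *
        simp [ha, hb]
      zero_mem' := by simp
      smul_mem' := by
        intro c x hx
        simp only [mem_ofPred_eq] at *
        simp [hx] }
  have hp : p ≠ ⊤ := by
    intro h
    have : ((1:ℝ), (0:ℝ), (0:ℝ)) ∈ p := by rw [h]; trivial
    have h2 : (1:ℝ) = 0 := this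
    norm_num at h2
  exact Measure.addHaar_submodule volume p hp

lemma aux_split (f : ℝ × ℝ × ℝ → ℝ) (hf : Continuous f) :
    ∫ x in auxX, f x = (∫ x in auxX ∩ {x | x.1 ≤ x.2.1}, f x)
      + ∫ x in auxX ∩ {x | x.2.1 ≤ x.1}, f x := by
  have hc : IsCompact auxX := isCompact_Icc.prod auxS_compact
  have hi : IntegrableOn f auxX := hf.continuousOn.integrableOn_compact hc
  have hcl : IsClosed {x : ℝ × ℝ × ℝ | x.2.1 ≤ x.1} := isClosed_le (by fun_prop) (by fun_prop)
  rw [← setIntegral_union₀]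
  · congr 2
    rw [← inter_union_distrib_left]
    symm
    apply inter_eq_left.mpr
    intro x _
    exact le_total x.1 x.2.1
  · refine measure_mono_null ?_ aux_null
    rintro x ⟨⟨_, h1⟩, ⟨_, h2⟩⟩
    exact le_antisymm h1 h2
  · exact (hc.isClosed.measurableSet.inter hcl.measurableSet).nullMeasurableSet
  · exact hi.mono_set inter_subset_left
  · exact hi.mono_set inter_subset_left

lemma aux_core (k : ℝ × ℝ → ℝ) (hk : Continuous k) (hev : ∀ p, k (-p) = k p) :
    ∫ x in auxX, k (x.1 - x.2.1, - x.2.2) = ∫ x in auxX, k (- x.2.1, x.1 - x.2.2) := by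
  let L1 : (ℝ × ℝ × ℝ) →ₗ[ℝ] (ℝ × ℝ × ℝ) :=
    { toFun := fun x => (x.1, x.2.2 + x.1, x.2.1 - x.1)
      map_add' := by intro x y; ext <;> simp <;> ring
      map_smul' := by intro c y; ext <;> simp <;> ring }
  let L2 : (ℝ × ℝ × ℝ) →ₗ[ℝ] (ℝ × ℝ × ℝ) :=
    { toFun := fun x => (x.2.1 + x.2.2, x.2.1, x.1 - x.2.1)
      map_add' := by intro x y; ext <;> simp <;> ring
      map_smul' := by intro c y; ext <;> simp <;> ring }
  let L3 : (ℝ × ℝ × ℝ) →ₗ[ℝ] (ℝ × ℝ × ℝ) :=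
    { toFun := fun x => (x.1, x.2.2, x.2.1)
      map_add' := by intro x y; ext <;> simp
      map_smul' := by intro c y; ext <;> simp }
  have e3 := aux_mp L3 (by intro x; simp [L3]) auxX (by
    rintro ⟨s, a, b⟩ ⟨⟨h1, h2⟩, h3, h4, h5⟩
    simp only at h1 h2 h3 h4 h5
    refine ⟨⟨?_, ?_⟩, ?_, ?_, ?_⟩ <;> simp [L3] <;> linarith)
    (fun x => k (- x.2.1, x.1 - x.2.2))
  have e1 := aux_mp L1 (by intro x; simp [L1]) (auxX ∩ {x | x.1 ≤ x.2.1}) (by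
    rintro ⟨s, a, b⟩ ⟨⟨⟨h1, h2⟩, h3, h4, h5⟩, h6⟩
    simp only [mem_ofPred_eq] at h1 h2 h3 h4 h5 h6
    refine ⟨⟨⟨?_, ?_⟩, ?_, ?_, ?_⟩, ?_⟩ <;> simp [L1] <;> linarith)
    (fun x => k (- x.2.2, x.1 - x.2.1))
  have e2 := aux_mp L2 (by intro x; simp [L2]) (auxX ∩ {x | x.2.1 ≤ x.1}) (by
    rintro ⟨s, a, b⟩ ⟨⟨⟨h1, h2⟩, h3, h4, h5⟩, h6⟩
    simp only [mem_ofPred_eq] at h1 h2 h3 h4 h5 h6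
    refine ⟨⟨⟨?_, ?_⟩, ?_, ?_, ?_⟩, ?_⟩ <;> simp [L2] <;> linarith)
    (fun x => k (- x.2.2, x.1 - x.2.1))
  rw [← e3]
  change _ = ∫ x in auxX, k (- x.2.2, x.1 - x.2.1)
  rw [aux_split _ (by fun_prop), aux_split _ (by fun_prop), ← e1, ← e2]
  congr 1
  · congr 1
    funext x
    simp [L1]
  · congr 1
    funext x
    rw [← hev]
    simp [L2]

lemma aux_fubini (f : ℝ × ℝ × ℝ → ℝ) (hf : Continuous f) :
    ∫ t in (0:ℝ)..1, ∫ p in auxS, f (t, p) = ∫ x in auxX, f x := by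
  have hc : IsCompact auxX := isCompact_Icc.prod auxS_compact
  have hi : IntegrableOn f auxX := hf.continuousOn.integrableOn_compact hc
  rw [intervalIntegral.integral_of_le zero_le_one, ← integral_Icc_eq_integral_Ioc]
  unfold auxX at *
  exact (setIntegral_prod (μ := (volume : Measure ℝ)) (ν := (volume : Measure (ℝ × ℝ))) _ hi).symm

lemma aux_hull (A B C : E2) : convexHull ℝ {A, B, C} =
    (fun p : ℝ × ℝ => A + (p.1 • (B - A) + p.2 • (C - A))) '' auxS := by
  apply Subset.antisymm
  · apply convexHull_min
    · rintro x (rfl | rfl | rfl)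
      · exact ⟨(0, 0), by simp [auxS], by simp⟩
      · exact ⟨(1, 0), by simp [auxS], by simp⟩
      · exact ⟨(0, 1), by simp [auxS], by simp⟩
    · rintro _ ⟨⟨a, b⟩, ⟨h1, h2, h3⟩, rfl⟩ _ ⟨⟨a', b'⟩, ⟨h1', h2', h3'⟩, rfl⟩ s t hs ht hst
      simp only at *
      refine ⟨(s * a + t * a', s * b + t * b'), ⟨by positivity, by positivity, ?_⟩, ?_⟩
      · simp only
        nlinarith
      · have : t = 1 - s := by linarith
        subst this
        simp only
        module
  · rintro _ ⟨⟨a, b⟩, ⟨h1, h2, h3⟩, rfl⟩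
    simp only at *
    have hA : A ∈ convexHull ℝ {A, B, C} := subset_convexHull _ _ (by simp)
    have hB : B ∈ convexHull ℝ {A, B, C} := subset_convexHull _ _ (by simp)
    have hC : C ∈ convexHull ℝ {A, B, C} := subset_convexHull _ _ (by simp)
    have := (convex_convexHull ℝ {A, B, C}).sum_mem (t := Finset.univ)
      (w := ![1 - a - b, a, b]) (z := ![A, B, C])
      (by intro i _; fin_cases i <;> simp <;> linarith)
      (by simp [Fin.sum_univ_three]; try ring)
      (by intro i _; fin_cases i <;> simp [hA, hB, hC])
    convert this using 1
    simp [Fin.sum_univ_three]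
    module

lemma aux_smul (μ ν : Measure E2) [μ.IsAddHaarMeasure] [ν.IsAddHaarMeasure] :
    ∃ c : ENNReal, μ = c • ν :=
  ⟨_, Measure.isAddLeftInvariant_eq_smul μ ν⟩

lemma aux_avg (K : ℝ → ℝ) (hK : Continuous K)
    (A B C : E2) (hABC : AffineIndependent ℝ ![A, B, C])
    (V : E2 → ℝ) (hV : ∀ x, V x = ∫ y in convexHull ℝ {A, B, C}, K (dist x y)) :
    ∫ t in (0:ℝ)..1, V ((1 - t) • A + t • B) = ∫ t in (0:ℝ)..1, V ((1 - t) • A + t • C) := by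
  let l : (ℝ × ℝ) →ₗ[ℝ] E2 :=
    { toFun := fun p => p.1 • (B - A) + p.2 • (C - A)
      map_add' := by intro x y; simp only [Prod.fst_add, Prod.snd_add]; module
      map_smul' := by intro c y; simp only [Prod.smul_fst, Prod.smul_snd, smul_eq_mul,
                        RingHom.id_apply]; module }
  have hinj : Function.Injective l := by
    rw [← LinearMap.ker_eq_bot, LinearMap.ker_eq_bot']
    rintro ⟨a, b⟩ h
    have h' : a • (B - A) + b • (C - A) = 0 := h
    have := (affineIndependent_iff.mp hABC) Finset.univ ![-a - b, a, b]
      (by simp [Fin.sum_univ_three]; try ring)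
      (by simp [Fin.sum_univ_three]; rw [← h']; module)
    have h1 := this 1 (Finset.mem_univ _)
    have h2 := this 2 (Finset.mem_univ _)
    simp at h1 h2
    simp [h1, h2]
  let e : (ℝ × ℝ) ≃L[ℝ] E2 :=
    (LinearEquiv.ofInjectiveOfFinrankEq l hinj (by simp)).toContinuousLinearEquiv
  have he : ∀ p, e p = p.1 • (B - A) + p.2 • (C - A) := fun p => rfl
  let ψ : (ℝ × ℝ) ≃ₜ E2 := e.toHomeomorph.trans (Homeomorph.addLeft A)
  have hψ : ∀ p, ψ p = A + (p.1 • (B - A) + p.2 • (C - A)) := fun p => rfl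
  have hmeas : ∃ c : ENNReal, (volume : Measure E2) = c • (volume : Measure (ℝ × ℝ)).map ψ := by
    have : (Measure.map e (volume : Measure (ℝ × ℝ))).IsAddHaarMeasure :=
      e.isAddHaarMeasure_map volume
    obtain ⟨c, hc⟩ := aux_smul (volume : Measure E2)
      ((volume : Measure (ℝ × ℝ)).map e)
    refine ⟨c, ?_⟩
    have : (volume : Measure (ℝ × ℝ)).map ψ
        = ((volume : Measure (ℝ × ℝ)).map e).map (fun x => A + x) := by
      rw [Measure.map_map (by fun_prop) e.continuous.measurable]
      rfl
    rw [this, map_add_left_eq_self, ← hc]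
  obtain ⟨c, hc⟩ := hmeas
  have himg : convexHull ℝ {A, B, C} = ψ '' auxS := aux_hull A B C
  have hpre : ψ ⁻¹' (convexHull ℝ {A, B, C}) = auxS := by
    rw [himg, preimage_image_eq _ ψ.injective]
  have hVx : ∀ x, V x = c.toReal * ∫ p in auxS, K (dist x (ψ p)) := by
    intro x
    rw [hV x, hc, Measure.restrict_smul, integral_smul_measure,
      ψ.measurableEmbedding.setIntegral_map, hpre, smul_eq_mul]
  let k : ℝ × ℝ → ℝ := fun p => K ‖e p‖
  have hk : Continuous k := by
    have := e.continuous
    fun_prop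
  have hev : ∀ p, k (-p) = k p := by
    intro p
    simp [k]
  have core := aux_core k hk hev
  rw [← aux_fubini _ (by fun_prop), ← aux_fubini _ (by fun_prop)] at core
  simp_rw [hVx]
  rw [intervalIntegral.integral_const_mul, intervalIntegral.integral_const_mul]
  congr 1
  have g1 : ∀ (t : ℝ) (p : ℝ × ℝ), K (dist ((1 - t) • A + t • B) (ψ p)) = k (t - p.1, -p.2) := by
    intro t p
    change _ = K ‖e (t - p.1, -p.2)‖
    rw [dist_eq_norm, hψ, he]
    congr 2
    module
  have g2 : ∀ (t : ℝ) (p : ℝ × ℝ), K (dist ((1 - t) • A + t • C) (ψ p)) = k (-p.1, t - p.2) := by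
    intro t p
    change _ = K ‖e (-p.1, t - p.2)‖
    rw [dist_eq_norm, hψ, he]
    congr 2
    module
  simp_rw [g1, g2]
  exact core

theorem stmt_2
    (K : ℝ → ℝ) (hK1 : ContDiff ℝ 1 K) (hKanti : StrictAntiOn K (Set.Ioi 0))
    (hKint : IntegrableOn (fun r => K r * r) (Set.Ioc (0:ℝ) 1))
    (A B C : E2) (hABC : AffineIndependent ℝ ![A, B, C])
    (V : E2 → ℝ) (hV : ∀ x, V x = ∫ y in convexHull ℝ {A, B, C}, K (dist x y)) :
    (1 / dist A B) * sideIntegral V A B = (1 / dist B C) * sideIntegral V B C ∧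
      (1 / dist B C) * sideIntegral V B C = (1 / dist A C) * sideIntegral V A C := by
  have h1 := aux_avg K hK1.continuous A B C hABC V hV
  have hB : AffineIndependent ℝ ![B, C, A] := by
    have := hABC.comp_embedding (finRotate 3).toEmbedding
    convert this using 1
    ext i
    fin_cases i <;> rfl
  have hset : ({B, C, A} : Set E2) = {A, B, C} := by
    ext x
    simp only [mem_insert_iff, mem_singleton_iff]
    tauto
  have h2 := aux_avg K hK1.continuous B C A hB V (by rw [hset]; exact hV)
  have hrev : ∫ t in (0:ℝ)..1, V ((1 - t) • B + t • A)
      = ∫ t in (0:ℝ)..1, V ((1 - t) • A + t • B) := by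
    have := intervalIntegral.integral_comp_sub_left (a := 0) (b := 1)
      (fun t : ℝ => V ((1 - t) • A + t • B)) 1
    simp only [sub_self, sub_zero, sub_sub_cancel] at this
    rw [← this]
    congr 1
    funext t
    rw [add_comm]
  have hinj := hABC.injective
  have dAB : dist A B ≠ 0 := dist_ne_zero.mpr fun h => by
    have := @hinj 0 1 h
    simp at this
  have dBC : dist B C ≠ 0 := dist_ne_zero.mpr fun h => by
    have := @hinj 1 2 h
    simp at this
  have dAC : dist A C ≠ 0 := dist_ne_zero.mpr fun h => by
    have := @hinj 0 2 h
    simp at this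
  unfold sideIntegral
  rw [one_div, one_div, one_div, inv_mul_cancel_left₀ dAB, inv_mul_cancel_left₀ dBC,
    inv_mul_cancel_left₀ dAC, ← h1, h2, hrev]
  exact ⟨rfl, rfl⟩
end
end
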